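/- Assume f : ℝ³ → ℝ is smooth, strictly positive, and satisfies two-sided Gaussian bounds c e^{−a‖v‖²} ≤ f(v) ≤ C e^{−b‖v‖²} (with 0 < c ≤ C, a ≥ b > 0), with all partial derivatives of f decaying faster than any polynomial. Let ψ : ℝ → ℝ be a C² convex function. Then ∫_{ℝ³} C_L(f)(v) ψ′(f(v)) dv ≤ 0; i.e. every convex function ψ of f is an entropy for the Lorentz electron–ion collision operator (for the homogeneous equation ∂_t f = C_L(f), t ↦ ∫ ψ(f) dv is nonincreasing). -/

import Mathlib

/-!
Away from the origin the flux `W = Φ ∇f` is smooth, it is pointwise orthogonal to the position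
vector (`v · Φ(v) u = 0`), and `∇f · W ≥ 0` by Cauchy–Schwarz. Take a radial cutoff
`m(v) = χ(‖v‖²)` with `χ ≥ 0` supported in a compact subset of `(0, ∞)`. The field `m ψ'(f) W` is
`C¹` with compact support, so its divergence integrates to zero. Since `∇m` is parallel to `v`, the
cutoff contributes nothing to this divergence, and
`∫ m C_L(f) ψ'(f) = -∫ m ψ''(f) ∇f · Φ ∇f ≤ 0` (`cutoff_integral_nonpos`).

Letting `χ` tend pointwise to `1` on `(0, ∞)` gives the claim by dominated convergence, with
the integrand itself as dominating function. If the integrand is not integrable, its Bochner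
integral is zero by convention and the inequality is trivial, so no estimate at the singularity
or at infinity is needed.
-/

open MeasureTheory Real
open scoped BigOperators Classical

noncomputable section

/-- ℝ³ as functions `Fin 3 → ℝ`. -/
abbrev V3 := Fin 3 → ℝ

/-- Squared Euclidean norm on ℝ³. -/
def nsq (v : V3) : ℝ := ∑ s, v s ^ 2

/-- Φ(u) = (‖u‖² Id − u ⊗ u)/‖u‖³ for u ≠ 0, and Φ(0) = 0. -/
def Phi (u : V3) : Matrix (Fin 3) (Fin 3) ℝ :=
  if u = 0 then 0
  else ((Real.sqrt (nsq u)) ^ 3)⁻¹ •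
    (nsq u • (1 : Matrix (Fin 3) (Fin 3) ℝ) - Matrix.vecMulVec u u)

/-- Gradient of a scalar function on ℝ³. -/
def grad (f : V3 → ℝ) (v : V3) : V3 := fun s => fderiv ℝ f v (Pi.single s 1)

/-- Divergence of a vector field on ℝ³. -/
def div3 (F : V3 → V3) (v : V3) : ℝ := ∑ s, fderiv ℝ F v (Pi.single s 1) s

/-- The inner (flux) integral of the Fokker–Planck–Landau operator. -/
def landauFlux (f : V3 → ℝ) (v : V3) : V3 :=
  ∫ w : V3, (Phi (v - w)).mulVec (f w • grad f v - f v • grad f w)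

/-- The Fokker–Planck–Landau collision operator `C(f,f) = ∇_v · landauFlux`. -/
def Cff (f : V3 → ℝ) (v : V3) : ℝ := div3 (landauFlux f) v

/-- The Lorentz electron–ion collision operator `C_L(f) = ∇_v · (Φ(v) ∇_v f)`. -/
def CL (f : V3 → ℝ) (v : V3) : ℝ := div3 (fun w => (Phi w).mulVec (grad f w)) v

lemma nsq_pos {v : V3} (hv : v ≠ 0) : 0 < nsq v := by
  obtain ⟨i, hi⟩ := Function.ne_iff.mp hv
  exact Finset.sum_pos' (fun s _ => sq_nonneg _) ⟨i, Finset.mem_univ _, by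
    have : v i ≠ 0 := hi
    positivity⟩

lemma contDiff_nsq {n : WithTop ℕ∞} : ContDiff ℝ n nsq := by
  unfold nsq
  fun_prop

lemma fderiv_nsq (v : V3) (s : Fin 3) : fderiv ℝ nsq v (Pi.single s 1) = 2 * v s := by
  have h : HasFDerivAt nsq
      (∑ i : Fin 3, (2 * v i) • (ContinuousLinearMap.proj i : V3 →L[ℝ] ℝ)) v := by
    unfold nsq
    refine HasFDerivAt.fun_sum fun i _ => ?_
    simpa using (hasFDerivAt_apply (𝕜 := ℝ) i v).pow 2
  rw [h.fderiv]
  simp [Pi.single_apply]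

lemma Phi_mulVec {v : V3} (hv : v ≠ 0) (u : V3) (s : Fin 3) :
    (Phi v).mulVec u s = ((√(nsq v)) ^ 3)⁻¹ * (nsq v * u s - v s * ∑ i, v i * u i) := by
  rw [Phi, if_neg hv, Matrix.smul_mulVec, Matrix.sub_mulVec, Matrix.smul_mulVec,
    Matrix.one_mulVec, Matrix.vecMulVec_mulVec]
  simp [dotProduct, mul_comm]

/-- The position vector lies in the kernel of the symmetric matrix `Φ(v)`. -/
lemma dot_Phi_mulVec (v u : V3) : ∑ s, v s * (Phi v).mulVec u s = 0 := by
  by_cases hv : v = 0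
  · simp [hv]
  · simp only [Phi_mulVec hv, Fin.sum_univ_three, nsq]
    ring

lemma Phi_mulVec_nonneg (v u : V3) : 0 ≤ ∑ s, u s * (Phi v).mulVec u s := by
  by_cases hv : v = 0
  · simp [Phi, hv]
  · -- Lagrange's identity
    have h : ∑ s, u s * (Phi v).mulVec u s = ((√(nsq v)) ^ 3)⁻¹ *
        ((v 0 * u 1 - v 1 * u 0) ^ 2 + (v 0 * u 2 - v 2 * u 0) ^ 2
          + (v 1 * u 2 - v 2 * u 1) ^ 2) := by
      simp only [Phi_mulVec hv, Fin.sum_univ_three, nsq]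
      ring
    rw [h]
    positivity

lemma contDiff_grad {f : V3 → ℝ} (hf : ContDiff ℝ 2 f) : ContDiff ℝ 1 (grad f) := by
  unfold grad
  refine contDiff_pi.2 fun s => ?_
  exact (hf.fderiv_right (m := 1) (by norm_num)).clm_apply contDiff_const

lemma contDiffAt_flux {f : V3 → ℝ} (hf : ContDiff ℝ 2 f) {v : V3} (hv : v ≠ 0) :
    ContDiffAt ℝ 1 (fun w => (Phi w).mulVec (grad f w)) v := by
  refine contDiffAt_pi.2 fun s => ?_
  have hg : ∀ i, ContDiffAt ℝ 1 (fun w => grad f w i) v :=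
    fun i => (contDiff_pi.1 (contDiff_grad hf) i).contDiffAt
  have hc : ∀ i, ContDiffAt ℝ 1 (fun w : V3 => w i) v :=
    fun i => (contDiff_apply ℝ ℝ i).contDiffAt
  have hn : ContDiffAt ℝ 1 nsq v := contDiff_nsq.contDiffAt
  have hsq : (√(nsq v)) ^ 3 ≠ 0 := (pow_pos (Real.sqrt_pos.2 (nsq_pos hv)) 3).ne'
  have key : ContDiffAt ℝ 1 (fun w : V3 => ((√(nsq w)) ^ 3)⁻¹ *
      (nsq w * grad f w s - w s * ∑ i, w i * grad f w i)) v :=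
    (((hn.sqrt (nsq_pos hv).ne').pow 3).inv hsq).mul
      ((hn.mul (hg s)).sub ((hc s).mul (ContDiffAt.sum fun i _ => (hc i).mul (hg i))))
  refine key.congr_of_eventuallyEq ?_
  filter_upwards [isOpen_ne.mem_nhds hv] with w hw
  exact Phi_mulVec hw _ s

lemma fderiv_component {F : V3 → V3} {v : V3} (hF : DifferentiableAt ℝ F v) (e : V3) (s : Fin 3) :
    fderiv ℝ F v e s = fderiv ℝ (fun w => F w s) v e := by
  rw [((hasFDerivAt_pi'.1 hF.hasFDerivAt) s).fderiv]
  rfl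

lemma integrable_fderiv_of_hasCompactSupport {g : V3 → ℝ} (hg : ContDiff ℝ 1 g)
    (hs : HasCompactSupport g) (e : V3) : Integrable (fun v => fderiv ℝ g v e) :=
  ((hg.continuous_fderiv one_ne_zero).clm_apply continuous_const).integrable_of_hasCompactSupport
    (hs.fderiv_apply ℝ e)

lemma integral_fderiv_of_hasCompactSupport {g : V3 → ℝ} (hg : ContDiff ℝ 1 g)
    (hs : HasCompactSupport g) (e : V3) : ∫ v, fderiv ℝ g v e = 0 := by
  have h := integral_mul_fderiv_eq_neg_fderiv_mul_of_integrable (μ := (volume : Measure V3))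
    (f := fun _ : V3 => (1 : ℝ)) (g := g) (v := e) (by simp)
    (by simpa using integrable_fderiv_of_hasCompactSupport hg hs e)
    (by simpa using hg.continuous.integrable_of_hasCompactSupport hs)
    (fun x _ => differentiableAt_const _)
    (fun x _ => (hg.differentiable one_ne_zero) x)
  simpa using h

lemma integral_div3_of_hasCompactSupport {F : V3 → V3} (hF : ContDiff ℝ 1 F)
    (hs : HasCompactSupport F) : ∫ v, div3 F v = 0 := by
  have hd : ∀ v s, fderiv ℝ F v (Pi.single s 1) s =
      fderiv ℝ (fun w => F w s) v (Pi.single s 1) :=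
    fun v s => fderiv_component (hF.differentiable one_ne_zero v) _ s
  have hFs : ∀ s, ContDiff ℝ 1 (fun w => F w s) := contDiff_pi.1 hF
  have hss : ∀ s, HasCompactSupport (fun w => F w s) :=
    fun s => hs.comp_left (g := fun u : V3 => u s) rfl
  simp only [div3, hd]
  rw [integral_finsetSum _ fun s _ => integrable_fderiv_of_hasCompactSupport (hFs s) (hss s) _]
  exact Finset.sum_eq_zero fun s _ => integral_fderiv_of_hasCompactSupport (hFs s) (hss s) _

/-- The product rule for the divergence of the truncated entropy flux. The term containing `χ'`
drops out because the flux is tangent to spheres. -/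
lemma div3_cutoff {f : V3 → ℝ} (hf : ContDiff ℝ 2 f) {χ p : ℝ → ℝ} (hχ : ContDiff ℝ 1 χ)
    (hp : ContDiff ℝ 1 p) {v : V3} (hv : v ≠ 0) :
    div3 (fun w => (χ (nsq w) * p (f w)) • (Phi w).mulVec (grad f w)) v =
      χ (nsq v) * (CL f v * p (f v)) + χ (nsq v) * (deriv p (f v) *
        ∑ s, grad f v s * (Phi v).mulVec (grad f v) s) := by
  set W : V3 → V3 := fun w => (Phi w).mulVec (grad f w) with hW
  have hWd : HasFDerivAt W (fderiv ℝ W v) v :=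
    ((contDiffAt_flux hf hv).differentiableAt one_ne_zero).hasFDerivAt
  have hχd : HasFDerivAt (fun w => χ (nsq w)) (deriv χ (nsq v) • fderiv ℝ nsq v) v :=
    ((hχ.differentiable one_ne_zero) _).hasDerivAt.comp_hasFDerivAt v
      ((contDiff_nsq (n := 1)).differentiable one_ne_zero v).hasFDerivAt
  have hpd : HasFDerivAt (fun w => p (f w)) (deriv p (f v) • fderiv ℝ f v) v :=
    ((hp.differentiable one_ne_zero) _).hasDerivAt.comp_hasFDerivAt v
      (hf.differentiable two_ne_zero v).hasFDerivAt
  have hsum := (hχd.mul hpd).smul hWd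
  have hdot : ∑ s, v s * W v s = 0 := dot_Phi_mulVec v _
  have hs : ∀ s, fderiv ℝ (fun w => (χ (nsq w) * p (f w)) • W w) v (Pi.single s 1) s =
      χ (nsq v) * p (f v) * fderiv ℝ W v (Pi.single s 1) s
      + χ (nsq v) * deriv p (f v) * (grad f v s * W v s)
      + 2 * p (f v) * deriv χ (nsq v) * (v s * W v s) := by
    intro s
    have h := congrArg (fun L : V3 →L[ℝ] V3 => L (Pi.single s 1) s) hsum.fderiv
    refine h.trans ?_
    simp [fderiv_nsq, grad]
    ring
  have hCL : CL f v = ∑ s, fderiv ℝ W v (Pi.single s 1) s := rfl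
  refine (Finset.sum_congr rfl fun s _ => hs s).trans ?_
  change _ = _ + χ (nsq v) * (deriv p (f v) * ∑ s, grad f v s * W v s)
  simp only [Finset.sum_add_distrib, ← Finset.mul_sum, hdot, hCL]
  ring

lemma cutoff_integral_nonpos {f : V3 → ℝ} (hf : ContDiff ℝ 2 f) {χ p : ℝ → ℝ}
    (hχ : ContDiff ℝ 1 χ) (hχ0 : ∀ t, 0 ≤ χ t) {δ R : ℝ} (hδ : 0 < δ)
    (hχδ : ∀ t ≤ δ, χ t = 0) (hχR : ∀ t, R ≤ t → χ t = 0)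
    (hp : ContDiff ℝ 1 p) (hp' : ∀ t, 0 ≤ deriv p t)
    (hint : Integrable fun v => χ (nsq v) * (CL f v * p (f v))) :
    ∫ v, χ (nsq v) * (CL f v * p (f v)) ≤ 0 := by
  set F : V3 → V3 := fun w => (χ (nsq w) * p (f w)) • (Phi w).mulVec (grad f w) with hFdef
  have hnear : ∀ᶠ w in nhds (0 : V3), χ (nsq w) = 0 := by
    have : ∀ᶠ w in nhds (0 : V3), nsq w < δ :=
      (contDiff_nsq (n := 0)).continuous.continuousAt.eventually_lt continuousAt_const
        (by simpa [nsq] using hδ)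
    filter_upwards [this] with w hw using hχδ _ hw.le
  have hF0 : F =ᶠ[nhds 0] fun _ => 0 := by
    filter_upwards [hnear] with w hw
    simp [hFdef, hw]
  have hF : ContDiff ℝ 1 F := by
    refine contDiff_iff_contDiffAt.2 fun v => ?_
    by_cases hv : v = 0
    · subst hv
      exact contDiffAt_const.congr_of_eventuallyEq hF0
    · exact ((hχ.comp contDiff_nsq).mul (hp.comp (hf.of_le (by norm_num)))).contDiffAt.smul
        (contDiffAt_flux hf hv)
  have hFs : HasCompactSupport F := by
    refine HasCompactSupport.intro (isCompact_closedBall (0 : V3) (√|R|)) fun v hv => ?_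
    have h1 : R ≤ nsq v := by
      by_contra hlt
      refine hv (mem_closedBall_zero_iff.2 ((pi_norm_le_iff_of_nonneg (Real.sqrt_nonneg _)).2 ?_))
      intro i
      refine Real.abs_le_sqrt ?_
      have : v i ^ 2 ≤ nsq v :=
        Finset.single_le_sum (f := fun s => v s ^ 2) (fun s _ => sq_nonneg _) (Finset.mem_univ i)
      linarith [le_abs_self R]
    simp [hFdef, hχR _ h1]
  have hdiv : ∀ v, div3 F v = χ (nsq v) * (CL f v * p (f v)) + χ (nsq v) * (deriv p (f v) *
      ∑ s, grad f v s * (Phi v).mulVec (grad f v) s) := by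
    intro v
    by_cases hv : v = 0
    · subst hv
      have : fderiv ℝ F 0 = 0 := by rw [hF0.fderiv_eq]; simp
      simp [div3, this, hnear.self_of_nhds]
    · exact div3_cutoff hf hχ hp hv
  have hdivint : Integrable (div3 F) := by
    have hc : Continuous (div3 F) := by
      unfold div3
      refine continuous_finsetSum _ fun s _ => ?_
      exact (continuous_apply s).comp
        ((hF.continuous_fderiv one_ne_zero).clm_apply continuous_const)
    refine hc.integrable_of_hasCompactSupport ((hFs.fderiv (𝕜 := ℝ)).mono fun v hv h0 => hv ?_)
    have h0' : fderiv ℝ F v = 0 := h0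
    simp [div3, h0']
  calc ∫ v, χ (nsq v) * (CL f v * p (f v)) ≤ ∫ v, div3 F v := by
        refine integral_mono hint hdivint fun v => ?_
        simp only [hdiv v]
        exact le_add_of_nonneg_right
          (mul_nonneg (hχ0 _) (mul_nonneg (hp' _) (Phi_mulVec_nonneg _ _)))
    _ = 0 := integral_div3_of_hasCompactSupport hF hFs

/-- A `[0, 1]`-valued smooth cutoff vanishing outside `(1 / (n + 1), n + 1)`; it tends to `1`
pointwise on `(0, ∞)` as `n → ∞`. -/
def cutoff (n : ℕ) (t : ℝ) : ℝ :=
  Real.smoothTransition ((n + 1) * t - 1) * Real.smoothTransition (n + 1 - t)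

lemma contDiff_cutoff (n : ℕ) : ContDiff ℝ 1 (cutoff n) :=
  ((Real.smoothTransition.contDiff (n := 1)).comp (by fun_prop)).mul
    ((Real.smoothTransition.contDiff (n := 1)).comp (by fun_prop))

lemma cutoff_nonneg (n : ℕ) (t : ℝ) : 0 ≤ cutoff n t :=
  mul_nonneg (Real.smoothTransition.nonneg _) (Real.smoothTransition.nonneg _)

lemma cutoff_le_one (n : ℕ) (t : ℝ) : cutoff n t ≤ 1 :=
  mul_le_one₀ (Real.smoothTransition.le_one _) (Real.smoothTransition.nonneg _)
    (Real.smoothTransition.le_one _)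

lemma cutoff_eventually_eq_one {t : ℝ} (ht : 0 < t) :
    ∀ᶠ n : ℕ in Filter.atTop, cutoff n t = 1 := by
  filter_upwards [tendsto_natCast_atTop_atTop.eventually_ge_atTop t,
    tendsto_natCast_atTop_atTop.eventually_ge_atTop (2 / t)] with n h1 h2
  have h3 : 2 ≤ n * t := (div_le_iff₀ ht).1 h2
  rw [cutoff, Real.smoothTransition.one_of_one_le (by linarith),
    Real.smoothTransition.one_of_one_le (by linarith), one_mul]

/-- every convex function ψ of f is an entropy for the Lorentz operator:
`∫ C_L(f) ψ′(f) ≤ 0`. -/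
theorem lorentz_convex_entropy
    (f : V3 → ℝ) (hf : ContDiff ℝ (⊤ : ℕ∞) f) (hpos : ∀ v, 0 < f v)
    (c C a b : ℝ) (hc : 0 < c) (hcC : c ≤ C) (hb : 0 < b) (hba : b ≤ a)
    (hlow : ∀ v, c * Real.exp (-a * nsq v) ≤ f v)
    (hup : ∀ v, f v ≤ C * Real.exp (-b * nsq v))
    (hdecay : ∀ n k : ℕ, ∃ M : ℝ, ∀ v : V3, ‖v‖ ^ k * ‖iteratedFDeriv ℝ n f v‖ ≤ M)
    (ψ : ℝ → ℝ) (hψ : ContDiff ℝ 2 ψ) (hconv : ConvexOn ℝ Set.univ ψ) :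
    (∫ v : V3, CL f v * deriv ψ (f v)) ≤ 0 := by
  have hp : ContDiff ℝ 1 (deriv ψ) := ContDiff.deriv' (n := 1) (by norm_num; exact hψ)
  have hmono : Monotone (deriv ψ) := monotoneOn_univ.1
    (hconv.monotoneOn_deriv fun x _ => hψ.differentiable two_ne_zero x)
  have hf2 : ContDiff ℝ 2 f := contDiff_infty.1 hf 2
  by_cases hG : Integrable fun v : V3 => CL f v * deriv ψ (f v)
  swap
  · exact (integral_undef hG).le
  have hmeas : ∀ n, AEStronglyMeasurable
      (fun v : V3 => cutoff n (nsq v) * (CL f v * deriv ψ (f v))) volume := fun n =>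
    ((contDiff_cutoff n).continuous.comp
      (contDiff_nsq (n := 0)).continuous).aestronglyMeasurable.mul hG.aestronglyMeasurable
  have hbound : ∀ n, ∀ v : V3, ‖cutoff n (nsq v) * (CL f v * deriv ψ (f v))‖ ≤
      ‖CL f v * deriv ψ (f v)‖ := fun n v => by
    rw [norm_mul, Real.norm_of_nonneg (cutoff_nonneg _ _)]
    exact mul_le_of_le_one_left (norm_nonneg _) (cutoff_le_one _ _)
  have hlim : Filter.Tendsto
      (fun n : ℕ => ∫ v : V3, cutoff n (nsq v) * (CL f v * deriv ψ (f v))) Filter.atTop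
      (nhds (∫ v : V3, CL f v * deriv ψ (f v))) := by
    refine tendsto_integral_of_dominated_convergence (fun v => ‖CL f v * deriv ψ (f v)‖) hmeas
      hG.norm (fun n => Filter.Eventually.of_forall (hbound n)) ?_
    filter_upwards [Measure.ae_ne volume (0 : V3)] with v hv
    refine tendsto_const_nhds.congr' ?_
    filter_upwards [cutoff_eventually_eq_one (nsq_pos hv)] with n hn
    rw [hn, one_mul]
  refine le_of_tendsto' hlim fun n => ?_
  have hn : (0 : ℝ) < n + 1 := by positivity
  refine cutoff_integral_nonpos hf2 (contDiff_cutoff n) (cutoff_nonneg n)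
    (δ := 1 / (n + 1)) (R := n + 1) (by positivity) ?_ ?_ hp (fun t => hmono.deriv_nonneg)
    (hG.mono (hmeas n) (Filter.Eventually.of_forall (hbound n)))
  · intro t ht
    have h1 : t * (n + 1) ≤ 1 := (le_div_iff₀ hn).1 ht
    rw [cutoff, Real.smoothTransition.zero_of_nonpos (by linarith), zero_mul]
  · intro t ht
    rw [cutoff, Real.smoothTransition.zero_of_nonpos (x := n + 1 - t) (by linarith), mul_zero]
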